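/- Let Γ be a finite group, s : Z/2Z → Γ a homomorphism, and (G,c,π) a class triple for s. Then the number of automorphisms of the triple satisfies |Aut(G,c,π)| = |(ker π)^{im s}| · |Aut_Γ(ker π)|, where (ker π)^{im s} is the subgroup of elements of ker π fixed by conjugation by every element of the image of c (equivalently, by the conjugation action of im s), and Aut_Γ(ker π) is the group of automorphisms ψ of ker π satisfying ψ(g n g⁻¹) = g ψ(n) g⁻¹ for all g ∈ G and n ∈ ker π. -/

import Mathlib

/-- `(G, c, π)` is a class triple for `s : ZMod 2 → Γ`:  `π` is surjective with abelian
kernel of order coprime to `|Γ|`, `π ∘ c = s`, the conjugation action of `Γ` (via preimages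
in `G`; equivalently of all of `G` since `π` is surjective) on `ker π` has trivial fixed
subgroup, and `im c ∩ ker π = 1`. -/
structure IsClassTriple {Γ G : Type*} [Group Γ] [Finite Γ] [Group G] [Finite G]
    (s : Multiplicative (ZMod 2) →* Γ) (π : G →* Γ)
    (c : Multiplicative (ZMod 2) →* G) : Prop where
  surjective : Function.Surjective π
  ker_comm : ∀ a b : π.ker, a * b = b * a
  coprime : Nat.Coprime (Nat.card π.ker) (Nat.card Γ)
  compat : π.comp c = s
  fixed_trivial : ∀ n : π.ker, (∀ g : G, g * (n : G) * g⁻¹ = (n : G)) → n = 1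
  range_inf_ker : c.range ⊓ π.ker = ⊥

/-- Vanishing of `H¹` in coprime order: two homomorphisms which agree modulo an abelian
normal subgroup of coprime order are conjugate by an element of this subgroup. -/
theorem aux_conj {H G : Type} [Group H] [Finite H] [Group G] [Finite G]
    (N : Subgroup G) [N.Normal] (hc : ∀ a b : N, a * b = b * a)
    (hcop : Nat.Coprime (Nat.card N) (Nat.card H))
    (σ σ' : H →* G) (hσ : ∀ x, σ' x * (σ x)⁻¹ ∈ N) :
    ∃ n : N, ∀ x, σ' x = n * σ x * (n : G)⁻¹ := by
  classical
  haveI : Fintype H := Fintype.ofFinite H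
  letI : CommGroup N := { (inferInstance : Group N) with mul_comm := hc }
  let f : H → N := fun x => ⟨σ' x * (σ x)⁻¹, hσ x⟩
  let A : H → (N →* N) := fun x => (MulAut.conjNormal (σ x) : MulAut N).toMonoidHom
  have hA : ∀ x (m : N), ((A x m : N) : G) = σ x * m * (σ x)⁻¹ := fun x m =>
    MulAut.conjNormal_apply _ _
  have hf : ∀ x y, f (x * y) = f x * A x (f y) := by
    intro x y
    apply Subtype.ext
    rw [Subgroup.coe_mul, hA]
    simp only [f, map_mul]
    group
  let P : N := ∏ y, f y
  have hP : ∀ x, P = f x ^ (Nat.card H) * A x P := by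
    intro x
    calc P = ∏ y, f (x * y) := (Equiv.prod_comp (Equiv.mulLeft x) f).symm
      _ = ∏ y, (f x * A x (f y)) := Finset.prod_congr rfl fun y _ => hf x y
      _ = _ := by
        rw [Finset.prod_mul_distrib, Finset.prod_const, Finset.card_univ, map_prod,
          Nat.card_eq_fintype_card]
  let e := powCoprime hcop
  obtain ⟨n, hn⟩ := e.surjective P
  have hn' : n ^ Nat.card H = P := hn
  refine ⟨n, fun x => ?_⟩
  have key : n = f x * A x n := by
    apply e.injective
    change n ^ Nat.card H = (f x * A x n) ^ Nat.card H
    rw [mul_pow, ← map_pow, hn']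
    exact hP x
  have k2 := congrArg (Subtype.val) key
  rw [Subgroup.coe_mul, hA] at k2
  simp only [f] at k2
  have k3 : (n : G) = σ' x * n * (σ x)⁻¹ := by
    exact k2.trans (by group)
  rw [eq_mul_inv_iff_mul_eq]
  rw [eq_mul_inv_iff_mul_eq] at k3
  exact k3.symm

/-- An equivariant automorphism of the kernel and a kernel element give an automorphism. -/
theorem aux_aut {Γ G : Type} [Group Γ] [Group G] [Finite G]
    (π : G →* Γ) (hc : ∀ a b : π.ker, a * b = b * a) (σ : Γ →* G) (hσ : ∀ x, π (σ x) = x)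
    (n : π.ker) (ψ : π.ker ≃* π.ker)
    (hψ : ∀ (g : G) (n : π.ker),
          ((ψ ⟨g * (n : G) * g⁻¹, π.normal_ker.conj_mem _ n.2 g⟩ : π.ker) : G)
            = g * ((ψ n : π.ker) : G) * g⁻¹) :
    ∃ τ : G ≃* G, (∀ m : π.ker, τ m = ψ m) ∧ ∀ x, τ (σ x) = n * σ x * (n : G)⁻¹ := by
  have hd : ∀ g, g * (σ (π g))⁻¹ ∈ π.ker := by
    intro g; simp [MonoidHom.mem_ker, hσ]
  let d : G → π.ker := fun g => ⟨g * (σ (π g))⁻¹, hd g⟩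
  have hdm : ∀ g k, (ψ (d (g * k)) : G) = ψ (d g) * (σ (π g) * ψ (d k) * (σ (π g))⁻¹) := by
    intro g k
    rw [← hψ, ← Subgroup.coe_mul, ← map_mul]
    congr 2
    apply Subtype.ext
    simp only [d, Subgroup.coe_mul, map_mul]
    group
  let t : G →* G := MonoidHom.mk' (fun g => ψ (d g) * σ (π g)) (by
    intro g k
    rw [hdm, map_mul, map_mul]
    group)
  have ht : ∀ g, t g = ψ (d g) * σ (π g) := fun g => rfl
  have htinj : Function.Injective t := by
    rw [injective_iff_map_eq_one]
    intro g hg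
    have h1 : π g = 1 := by
      have := congrArg π hg
      rw [ht, map_mul, hσ, MonoidHom.mem_ker.1 (ψ (d g)).2] at this
      simpa using this
    rw [ht, h1, map_one, mul_one] at hg
    have h2 : ψ (d g) = 1 := Subtype.ext hg
    have h3 : d g = 1 := by simpa using h2
    have h4 := congrArg Subtype.val h3
    simpa [d, h1] using h4
  let T : G ≃* G := MulEquiv.ofBijective t (Finite.injective_iff_bijective.1 htinj)
  have hT : ∀ g, T g = ψ (d g) * σ (π g) := fun g => rfl
  refine ⟨T.trans (MulAut.conj (n : G)), fun m => ?_, fun x => ?_⟩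
  · have h1 : d m = m := Subtype.ext (by simp [d, MonoidHom.mem_ker.1 m.2])
    rw [MulEquiv.trans_apply, hT, h1, MonoidHom.mem_ker.1 m.2, map_one, mul_one,
      MulAut.conj_apply, mul_inv_eq_iff_eq_mul]
    exact congrArg Subtype.val (hc n (ψ m))
  · have h1 : d (σ x) = 1 := Subtype.ext (by simp [d, hσ])
    rw [MulEquiv.trans_apply, hT, h1, hσ, map_one, Subgroup.coe_one, one_mul,
      MulAut.conj_apply]

/-- There is a section of `π` compatible with `c`. -/
theorem aux_section {Γ G : Type} [Group Γ] [Finite Γ] [Group G] [Finite G]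
    (s : Multiplicative (ZMod 2) →* Γ) (π : G →* Γ) (c : Multiplicative (ZMod 2) →* G)
    (h : IsClassTriple s π c) :
    ∃ σ : Γ →* G, (∀ x, π (σ x) = x) ∧ ∀ x, σ (π (c x)) = c x := by
  have hidx : π.ker.index = Nat.card Γ := by
    rw [Subgroup.index_ker, MonoidHom.range_eq_top.2 h.surjective]
    simp
  obtain ⟨K, hK⟩ := Subgroup.exists_right_complement'_of_coprime (N := π.ker)
    (by rw [hidx]; exact h.coprime)
  have hbij : Function.Bijective (π.comp K.subtype) := by
    constructor
    · rw [injective_iff_map_eq_one]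
      intro k hk
      have h1 : (k : G) ∈ π.ker ⊓ K := ⟨hk, k.2⟩
      rw [hK.disjoint.eq_bot] at h1
      exact Subtype.ext (Subgroup.mem_bot.1 h1)
    · intro x
      obtain ⟨g, rfl⟩ := h.surjective x
      obtain ⟨⟨a, b⟩, hab⟩ := hK.surjective g
      refine ⟨b, ?_⟩
      have : (a : G) * b = g := hab
      rw [← this, map_mul, MonoidHom.mem_ker.1 a.2, one_mul]
      rfl
  let E := MulEquiv.ofBijective (π.comp K.subtype) hbij
  let σ₀ : Γ →* G := K.subtype.comp E.symm.toMonoidHom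
  have hσ₀ : ∀ x, π (σ₀ x) = x := fun x => E.apply_symm_apply x
  have hcopy : ∃ n : π.ker, ∀ x, c x = n * σ₀ (π (c x)) * (n : G)⁻¹ := by
    by_cases hs : ∀ x, π (c x) = 1
    · refine ⟨1, fun x => ?_⟩
      have : c x ∈ c.range ⊓ π.ker := ⟨⟨x, rfl⟩, hs x⟩
      rw [h.range_inf_ker, Subgroup.mem_bot] at this
      simp [this]
    · push Not at hs
      obtain ⟨x, hx⟩ := hs
      have hx2 : x ^ 2 = 1 := by
        have : Nat.card (Multiplicative (ZMod 2)) = 2 := by simp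
        have h2 := pow_card_eq_one' (x := x)
        rwa [this] at h2
      have ho : orderOf (π (c x)) = 2 :=
        orderOf_eq_prime (by rw [← map_pow, ← map_pow, hx2]; simp) hx
      have hdvd : 2 ∣ Nat.card Γ := ho ▸ orderOf_dvd_natCard _
      refine aux_conj π.ker h.ker_comm ?_ ((σ₀.comp π).comp c) c ?_
      · have : Nat.card (Multiplicative (ZMod 2)) = 2 := by simp
        rw [this]
        exact h.coprime.coprime_dvd_right hdvd
      · intro y
        simp [MonoidHom.mem_ker, hσ₀]
  obtain ⟨n, hn⟩ := hcopy
  refine ⟨(MulAut.conj (n : G)).toMonoidHom.comp σ₀, fun x => ?_, fun x => ?_⟩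
  · simp [hσ₀, MonoidHom.mem_ker.1 n.2]
  · exact (hn x).symm

theorem card_aut_classTriple {Γ G : Type} [Group Γ] [Finite Γ] [Group G] [Finite G]
    (s : Multiplicative (ZMod 2) →* Γ) (π : G →* Γ) (c : Multiplicative (ZMod 2) →* G)
    (h : IsClassTriple s π c) :
    Nat.card {τ : G ≃* G // (∀ g, π (τ g) = π g) ∧ ∀ x, τ (c x) = c x} =
      Nat.card {n : π.ker // ∀ x : Multiplicative (ZMod 2),
          c x * (n : G) * (c x)⁻¹ = (n : G)} *
      Nat.card {ψ : π.ker ≃* π.ker // ∀ (g : G) (n : π.ker),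
          ((ψ ⟨g * (n : G) * g⁻¹, π.normal_ker.conj_mem _ n.2 g⟩ : π.ker) : G)
            = g * ((ψ n : π.ker) : G) * g⁻¹} := by
  classical
  obtain ⟨σ, hσ, hσc⟩ := aux_section s π c h
  have hdec : ∀ g, ∃ m : π.ker, (m : G) * σ (π g) = g := fun g =>
    ⟨⟨g * (σ (π g))⁻¹, by simp [MonoidHom.mem_ker, hσ]⟩, by simp⟩
  rw [← Nat.card_prod]
  symm
  have hex := fun (p : {n : π.ker // ∀ x : Multiplicative (ZMod 2),
          c x * (n : G) * (c x)⁻¹ = (n : G)} ×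
      {ψ : π.ker ≃* π.ker // ∀ (g : G) (n : π.ker),
          ((ψ ⟨g * (n : G) * g⁻¹, π.normal_ker.conj_mem _ n.2 g⟩ : π.ker) : G)
            = g * ((ψ n : π.ker) : G) * g⁻¹}) =>
    aux_aut π h.ker_comm σ hσ p.1.1 p.2.1 p.2.2
  choose T hT1 hT2 using hex
  have hTπ : ∀ p g, π (T p g) = π g := by
    intro p g
    obtain ⟨m, hm⟩ := hdec g
    conv_lhs => rw [← hm]
    rw [map_mul, hT1, hT2]
    simp [MonoidHom.mem_ker.1 (p.2.1 m).2, MonoidHom.mem_ker.1 p.1.1.2, hσ]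
  have hTc : ∀ p x, T p (c x) = c x := by
    intro p x
    rw [← hσc, hT2, hσc]
    have := p.1.2 x
    rw [mul_inv_eq_iff_eq_mul] at this ⊢
    exact this.symm
  refine Nat.card_congr (Equiv.ofBijective
    (fun p => ⟨T p, hTπ p, hTc p⟩) ⟨?_, ?_⟩)
  · intro p q hpq
    have hpq' : T p = T q := congrArg Subtype.val hpq
    have h2 : p.2 = q.2 := by
      apply Subtype.ext
      apply MulEquiv.ext
      intro m
      apply Subtype.ext
      rw [← hT1, ← hT1, hpq']
    have h1 : p.1 = q.1 := by
      apply Subtype.ext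
      rw [← inv_mul_eq_one]
      symm
      symm
      apply h.fixed_trivial
      intro g
      obtain ⟨m, hm⟩ := hdec g
      have e1 : (p.1.1 : G) * σ (π g) * (p.1.1 : G)⁻¹ = q.1.1 * σ (π g) * (q.1.1 : G)⁻¹ := by
        rw [← hT2, ← hT2, hpq']
      have e2 : σ (π g) * ((p.1.1⁻¹ * q.1.1 : π.ker) : G) * (σ (π g))⁻¹
          = ((p.1.1⁻¹ * q.1.1 : π.ker) : G) := by
        rw [mul_inv_eq_iff_eq_mul] at e1 ⊢
        rw [Subgroup.coe_mul, Subgroup.coe_inv]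
        have e3 : σ (π g) = (p.1.1 : G)⁻¹ * (q.1.1 * σ (π g) * (q.1.1 : G)⁻¹ * p.1.1) := by
          rw [← e1]; group
        conv_lhs => rw [e3]
        group
      have e4 := congrArg Subtype.val (h.ker_comm m (p.1.1⁻¹ * q.1.1))
      rw [← hm]
      calc _ = (m : G) * (σ (π g) * ((p.1.1⁻¹ * q.1.1 : π.ker) : G) * (σ (π g))⁻¹)
            * (m : G)⁻¹ := by group
        _ = _ := by
          rw [e2, mul_inv_eq_iff_eq_mul]
          exact e4
    exact Prod.ext h1 h2
  · rintro ⟨τ, hτπ, hτc⟩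
    have hmem : ∀ m : π.ker, τ m ∈ π.ker := fun m => by
      rw [MonoidHom.mem_ker, hτπ]; exact m.2
    let ψ₀ : π.ker →* π.ker := (τ.toMonoidHom.comp π.ker.subtype).codRestrict π.ker hmem
    have hψ₀ : ∀ m : π.ker, ((ψ₀ m : π.ker) : G) = τ m := fun m => rfl
    have hinj : Function.Injective ψ₀ := by
      intro a b hab
      have := congrArg Subtype.val hab
      rw [hψ₀, hψ₀] at this
      exact Subtype.ext (τ.injective this)
    let ψ : π.ker ≃* π.ker := MulEquiv.ofBijective ψ₀ (Finite.injective_iff_bijective.1 hinj)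
    have hψ : ∀ m : π.ker, ((ψ m : π.ker) : G) = τ m := fun m => rfl
    have hequiv : ∀ (g : G) (n : π.ker),
          ((ψ ⟨g * (n : G) * g⁻¹, π.normal_ker.conj_mem _ n.2 g⟩ : π.ker) : G)
            = g * ((ψ n : π.ker) : G) * g⁻¹ := by
      intro g n
      have hk : g⁻¹ * τ g ∈ π.ker := by simp [MonoidHom.mem_ker, hτπ]
      have e := congrArg Subtype.val (h.ker_comm ⟨_, hk⟩ (ψ n))
      simp only [Subgroup.coe_mul] at e
      rw [hψ]
      simp only [map_mul, map_inv]
      rw [← hψ n, mul_inv_eq_iff_eq_mul]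
      calc τ g * (ψ n : G) = g * (g⁻¹ * τ g * ψ n) := by group
        _ = _ := by rw [e]; group
    obtain ⟨n, hn⟩ := aux_conj π.ker h.ker_comm h.coprime σ (τ.toMonoidHom.comp σ) (by
      intro x
      simp [MonoidHom.mem_ker, hτπ, hσ])
    have hn' : ∀ x, τ (σ x) = n * σ x * (n : G)⁻¹ := hn
    have hfix : ∀ x : Multiplicative (ZMod 2), c x * (n : G) * (c x)⁻¹ = (n : G) := by
      intro x
      have := hn' (π (c x))
      rw [hσc, hτc, eq_mul_inv_iff_mul_eq] at this
      rw [mul_inv_eq_iff_eq_mul]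
      exact this
    refine ⟨(⟨n, hfix⟩, ⟨ψ, hequiv⟩), ?_⟩
    apply Subtype.ext
    apply MulEquiv.ext
    intro g
    obtain ⟨m, hm⟩ := hdec g
    rw [← hm]
    simp only [map_mul]
    rw [hT1, hT2, hn', ← hψ]
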